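/- Fix an interval [a,b] ⊆ [0,1], a real number c, a bounded upper semicontinuous function v : [0,1] → ℝ, and continuous functions ũ_1,…,ũ_n : [0,1] → ℝ. Consider the set 𝒟 of Borel probability measures G̃ on [0,1] such that G̃([a,b]) = 1, ∫_0^1 ũ_i dG̃ ≥ 0 for each i ∈ {1,…,n}, and ∫_a^b H_{G̃}(s) ds = c, where H_{G̃} denotes the CDF of G̃. If 𝒟 is nonempty, then the maximization of ∫_0^1 v dG̃ over 𝒟 admits a solution whose support is a finite set of cardinality at most n + 2. -/

import Mathlib

open MeasureTheory Set

/-- The constraint set `𝒟`: Borel probability measures on `[0,1]` giving full mass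
to `[a,b]`, satisfying the `n` side constraints, and whose CDF
`H(s) = G̃([0,s])` integrates to `c` over `[a,b]`. -/
def Dset (a b c : ℝ) {n : ℕ} (u : Fin n → ℝ → ℝ) : Set (Measure ℝ) :=
  {μ | IsProbabilityMeasure μ ∧ μ (Set.Icc a b) = 1 ∧
    (∀ i, 0 ≤ ∫ s in Set.Icc (0:ℝ) 1, u i s ∂μ) ∧
    (∫ s in a..b, (μ (Set.Icc 0 s)).toReal) = c}

/-!
By the layer-cake formula the CDF constraint is the moment constraint `∫ x dG̃ = b - c`, so `𝒟` is
cut out by `n + 1` moments. Together with the objective `∫ v dG̃` they form a point of `ℝ ^ (n + 2)`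
in the convex hull of the curve of moments with the hypograph of `v` over it; truncating the
hypograph makes this hull compact, so it has a highest point among those with admissible moments.
That point is not interior to the hull, so Carathéodory's theorem writes it as a convex combination
of `n + 2` points instead of `n + 3`. Raising these points to the graph of `v` gives the weights and
atoms of a solution.
-/

section Caratheodory

universe u

theorem card_le_finrank_add_one_of_affineIndependent {𝕜 V P ι : Type*} [DivisionRing 𝕜]
    [AddCommGroup V] [Module 𝕜 V] [FiniteDimensional 𝕜 V] [AddTorsor V P] [Fintype ι] {z : ι → P}
    (hz : AffineIndependent 𝕜 z) : Fintype.card ι ≤ Module.finrank 𝕜 V + 1 :=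
  hz.card_le_finrank_succ.trans (Nat.succ_le_succ (Submodule.finrank_le _))

theorem convexHull_eq_iUnion_image_stdSimplex {E : Type*} [AddCommGroup E] [Module ℝ E]
    [FiniteDimensional ℝ E] (s : Set E) :
    convexHull ℝ s = ⋃ k ∈ Iic (Module.finrank ℝ E + 1),
      (fun p : (Fin k → ℝ) × (Fin k → E) ↦ ∑ i, p.1 i • p.2 i) ''
        (stdSimplex ℝ (Fin k) ×ˢ univ.pi fun _ ↦ s) := by
  apply Subset.antisymm
  · intro x hx
    obtain ⟨ι, _, z, w, hzs, hz, hw, hw1, rfl⟩ := eq_pos_convex_span_of_mem_convexHull hx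
    let e := (Fintype.equivFin ι).symm
    have hw_comp : w ∘ e ∈ stdSimplex ℝ (Fin (Fintype.card ι)) :=
      ⟨fun i ↦ (hw (e i)).le, (e.sum_comp w).trans hw1⟩
    exact mem_biUnion (card_le_finrank_add_one_of_affineIndependent hz)
      ⟨(w ∘ e, z ∘ e), ⟨hw_comp, fun i _ ↦ hzs (mem_range_self (e i))⟩,
        e.sum_comp fun i ↦ w i • z i⟩
  · refine iUnion₂_subset fun k _ ↦ ?_
    rintro _ ⟨⟨w, z⟩, ⟨hw, hz⟩, rfl⟩
    exact (convex_convexHull ℝ s).sum_mem (fun i _ ↦ hw.1 i) hw.2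
      fun i _ ↦ subset_convexHull ℝ s (hz i trivial)

theorem isCompact_convexHull_of_isCompact {E : Type*} [AddCommGroup E] [Module ℝ E]
    [FiniteDimensional ℝ E] [TopologicalSpace E] [ContinuousAdd E] [ContinuousSMul ℝ E]
    {s : Set E} (hs : IsCompact s) : IsCompact (convexHull ℝ s) := by
  rw [convexHull_eq_iUnion_image_stdSimplex]
  refine (finite_Iic _).isCompact_biUnion fun k _ ↦ ?_
  exact ((isCompact_stdSimplex ℝ (Fin k)).prod (isCompact_univ_pi fun _ ↦ hs)).image (by fun_prop)

theorem exists_pos_add_smul_mem_of_mem_interior {E : Type*} [AddCommGroup E] [Module ℝ E]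
    [TopologicalSpace E] [ContinuousAdd E] [ContinuousSMul ℝ E] {s : Set E} {x : E}
    (hx : x ∈ interior s) (e : E) : ∃ ε : ℝ, 0 < ε ∧ x + ε • e ∈ s := by
  have hcont : ContinuousAt (fun ε : ℝ ↦ x + ε • e) 0 := by fun_prop
  have hs : s ∈ nhds (x + (0 : ℝ) • e) := by simpa using mem_interior_iff_mem_nhds.1 hx
  have hmem : ∀ᶠ ε in nhdsWithin (0 : ℝ) (Ioi 0), x + ε • e ∈ s :=
    (hcont.eventually hs).filter_mono nhdsWithin_le_nhds
  obtain ⟨ε, hε, hpos⟩ := (hmem.and self_mem_nhdsWithin).exists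
  exact ⟨ε, hpos, hε⟩

variable {E : Type u} [NormedAddCommGroup E] [NormedSpace ℝ E] [FiniteDimensional ℝ E]

theorem sum_smul_mem_interior_convexHull_range {ι : Type*} [Fintype ι] {z : ι → E}
    (hz : AffineIndependent ℝ z) (hcard : Fintype.card ι = Module.finrank ℝ E + 1)
    {w : ι → ℝ} (hw : ∀ i, 0 < w i) (hw1 : ∑ i, w i = 1) :
    ∑ i, w i • z i ∈ interior (convexHull ℝ (range z)) := by
  let basis : AffineBasis ι ℝ E :=
    ⟨z, hz, hz.affineSpan_eq_top_iff_card_eq_finrank_add_one.2 hcard⟩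
  change ∑ i, w i • z i ∈ interior (convexHull ℝ (range basis))
  rw [basis.interior_convexHull,
    ← Finset.univ.affineCombination_eq_linear_combination z w hw1]
  intro i
  exact (hw i).trans_eq (basis.coord_apply_combination_of_mem (Finset.mem_univ i) hw1).symm

theorem exists_convex_combination_card_le_finrank_of_notMem_interior {s : Set E} {x : E}
    (hx : x ∈ convexHull ℝ s) (hx_int : x ∉ interior (convexHull ℝ s)) :
    ∃ (ι : Type u) (_ : Fintype ι) (w : ι → ℝ) (z : ι → E),
      Fintype.card ι ≤ Module.finrank ℝ E ∧ w ∈ stdSimplex ℝ ι ∧ (∀ i, z i ∈ s) ∧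
        ∑ i, w i • z i = x := by
  obtain ⟨ι, _, z, w, hzs, hz, hw, hw1, rfl⟩ := eq_pos_convex_span_of_mem_convexHull hx
  refine ⟨ι, ‹_›, w, z, ?_, ⟨fun i ↦ (hw i).le, hw1⟩, fun i ↦ hzs (mem_range_self i), rfl⟩
  refine Nat.le_of_lt_succ ((card_le_finrank_add_one_of_affineIndependent hz).lt_of_ne
    fun hcard ↦ hx_int ?_)
  exact interior_mono (convexHull_mono hzs)
    (sum_smul_mem_interior_convexHull_range hz hcard hw hw1)

end Caratheodory

section WeightedDirac

variable {X ι : Type*} [MeasurableSpace X] [Fintype ι] {w : ι → ℝ}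

/-- The discrete measure with mass `w i` at `x i`, used to realize convex combinations as integrals.
The weights are real, to match `stdSimplex ℝ ι`; negative ones count as `0`. -/
noncomputable def weightedDirac (w : ι → ℝ) (x : ι → X) : Measure X :=
  ∑ i, ENNReal.ofReal (w i) • Measure.dirac (x i)

theorem isProbabilityMeasure_weightedDirac (hw : w ∈ stdSimplex ℝ ι) (x : ι → X) :
    IsProbabilityMeasure (weightedDirac w x) := by
  constructor
  simp only [weightedDirac, Measure.coe_finsetSum, Finset.sum_apply, Measure.smul_apply,
    measure_univ, smul_eq_mul, mul_one]
  rw [← ENNReal.ofReal_sum_of_nonneg fun i _ ↦ hw.1 i, hw.2, ENNReal.ofReal_one]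

variable [MeasurableSingletonClass X]

theorem ae_weightedDirac {x : ι → X} {p : X → Prop} (hp : ∀ i, p (x i)) :
    ∀ᵐ y ∂weightedDirac w x, p y := by
  simp [ae_iff, weightedDirac, hp]

theorem integral_weightedDirac {E : Type*} [NormedAddCommGroup E] [NormedSpace ℝ E]
    [CompleteSpace E] (hw : ∀ i, 0 ≤ w i) (x : ι → X) (f : X → E) :
    ∫ y, f y ∂weightedDirac w x = ∑ i, w i • f (x i) := by
  have hint (i : ι) : Integrable f (ENNReal.ofReal (w i) • Measure.dirac (x i)) :=
    (integrable_dirac enorm_lt_top).smul_measure ENNReal.ofReal_ne_top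
  simp only [weightedDirac, integral_finsetSum_measure fun i _ ↦ hint i, integral_smul_measure,
    integral_dirac, ENNReal.toReal_ofReal (hw _)]

end WeightedDirac

section Integrability

variable {X : Type*} [TopologicalSpace X] [T2Space X] [MeasurableSpace X] [OpensMeasurableSpace X]
  {μ : Measure X} [IsFiniteMeasureOnCompacts μ] {K : Set X}

theorem integrable_of_continuousOn_of_ae_mem {F : Type*} [NormedAddCommGroup F] {f : X → F}
    (hK : IsCompact K) (hμ : ∀ᵐ x ∂μ, x ∈ K) (hf : ContinuousOn f K) : Integrable f μ := by
  rw [← Measure.restrict_eq_self_of_ae_mem hμ]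
  exact hf.integrableOn_compact hK

theorem integrable_of_upperSemicontinuousOn_of_ae_mem {v : X → ℝ} (hK : IsCompact K)
    (hμ : ∀ᵐ x ∂μ, x ∈ K) (hv : UpperSemicontinuousOn v K) (hv_bdd : BddBelow (v '' K)) :
    Integrable v μ := by
  obtain ⟨m, hm⟩ := hv_bdd
  obtain ⟨M, hM⟩ := hv.bddAbove_of_isCompact hK
  have hv_meas : AEMeasurable v (μ.restrict K) :=
    aemeasurable_restrict_of_measurable_subtype hK.measurableSet
      (upperSemicontinuousOn_iff_restrict.2 hv).measurable
  rw [← Measure.restrict_eq_self_of_ae_mem hμ]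
  refine IntegrableOn.of_bound hK.measure_lt_top hv_meas.aestronglyMeasurable (max |m| |M|) ?_
  filter_upwards [ae_restrict_mem hK.measurableSet] with x hx
  exact abs_le_max_abs_abs (hm (mem_image_of_mem v hx)) (hM (mem_image_of_mem v hx))

end Integrability

section MomentProblem

/-- The part of the hypograph of `v` over `K` above height `m`; the cut makes it compact. -/
def truncatedHypograph {X : Type*} (K : Set X) (v : X → ℝ) (m : ℝ) : Set (X × ℝ) :=
  {p | p.1 ∈ K ∧ p.2 ∈ Icc m (v p.1)}

theorem isCompact_truncatedHypograph {X : Type*} [TopologicalSpace X] [T2Space X] {K : Set X}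
    {v : X → ℝ} (hK : IsCompact K) (hv : UpperSemicontinuousOn v K) (m : ℝ) :
    IsCompact (truncatedHypograph K v m) := by
  obtain ⟨M, hM⟩ := hv.bddAbove_of_isCompact hK
  have hclosed : IsClosed {p : X × ℝ | p.1 ∈ K ∧ p.2 ≤ v p.1} :=
    (upperSemicontinuousOn_iff_isClosed_hypograph hK.isClosed).1 hv
  convert (hK.prod (isCompact_Icc (a := m) (b := M))).inter_right hclosed using 1
  ext p
  simp only [truncatedHypograph, mem_ofPred_eq, mem_inter_iff, mem_prod, mem_Icc]
  exact ⟨fun ⟨hp, hmp, hpv⟩ ↦ ⟨⟨hp, hmp, hpv.trans (hM (mem_image_of_mem v hp))⟩, hp, hpv⟩,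
    fun ⟨⟨hp, hmp, _⟩, _, hpv⟩ ↦ ⟨hp, hmp, hpv⟩⟩

variable {X E : Type*} [NormedAddCommGroup E] [NormedSpace ℝ E]

/-- The convex hull of the points `(φ x, t)` with `x ∈ K` and `m ≤ t ≤ v x`. It contains the pairs
`(∫ φ, ∫ v)` of the probability measures on `K`, and the hypograph makes it compact although the
set of these pairs need not be closed. -/
def momentHull (K : Set X) (φ : X → E) (v : X → ℝ) (m : ℝ) : Set (E × ℝ) :=
  convexHull ℝ (Prod.map φ id '' truncatedHypograph K v m)

/-- The probability measures concentrated on `K` whose moment vector `∫ φ` lies in `C`: the feasible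
set of a moment problem. -/
def feasibleMeasures [MeasurableSpace X] (K : Set X) (φ : X → E) (C : Set E) : Set (Measure X) :=
  {μ | IsProbabilityMeasure μ ∧ (∀ᵐ x ∂μ, x ∈ K) ∧ ∫ x, φ x ∂μ ∈ C}

variable [FiniteDimensional ℝ E] {K : Set X} {φ : X → E} {v : X → ℝ} {m : ℝ}

theorem exists_finite_support_of_mem_momentHull [MeasurableSpace X] [MeasurableSingletonClass X]
    {p : E × ℝ} (hp : p ∈ momentHull K φ v m) (hp_int : p ∉ interior (momentHull K φ v m)) :
    ∃ μ ∈ feasibleMeasures K φ {p.1}, p.2 ≤ ∫ x, v x ∂μ ∧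
      ∃ S : Finset X, S.card ≤ Module.finrank ℝ E + 1 ∧ μ (↑S)ᶜ = 0 := by
  classical
  obtain ⟨ι, _, w, z, hcard, hw, hz, rfl⟩ :=
    exists_convex_combination_card_le_finrank_of_notMem_interior hp hp_int
  choose q hq hqz using hz
  obtain rfl : (fun i ↦ Prod.map φ id (q i)) = z := funext hqz
  let x (i : ι) : X := (q i).1
  refine ⟨weightedDirac w x, ⟨isProbabilityMeasure_weightedDirac hw x,
    ae_weightedDirac fun i ↦ (hq i).1, ?_⟩, ?_, Finset.univ.image x, ?_, ?_⟩
  · rw [integral_weightedDirac hw.1, Prod.fst_sum]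
    rfl
  · rw [integral_weightedDirac hw.1, Prod.snd_sum]
    exact Finset.sum_le_sum fun i _ ↦ mul_le_mul_of_nonneg_left (hq i).2.2 (hw.1 i)
  · rw [Module.finrank_prod, Module.finrank_self] at hcard
    exact Finset.card_image_le.trans hcard
  · exact ae_weightedDirac fun i ↦ Finset.mem_image_of_mem x (Finset.mem_univ i)

variable [TopologicalSpace X] [T2Space X]

theorem isCompact_momentHull (hK : IsCompact K) (hφ : ContinuousOn φ K)
    (hv : UpperSemicontinuousOn v K) : IsCompact (momentHull K φ v m) := by
  refine isCompact_convexHull_of_isCompact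
    ((isCompact_truncatedHypograph hK hv m).image_of_continuousOn ?_)
  exact (hφ.prodMap continuousOn_id).mono fun p hp ↦ ⟨hp.1, mem_univ p.2⟩

theorem integral_mem_momentHull [MeasurableSpace X] [OpensMeasurableSpace X] {μ : Measure X}
    [IsProbabilityMeasure μ] (hK : IsCompact K) (hμ : ∀ᵐ x ∂μ, x ∈ K) (hφ : ContinuousOn φ K)
    (hv : UpperSemicontinuousOn v K) (hm : m ∈ lowerBounds (v '' K)) :
    (∫ x, φ x ∂μ, ∫ x, v x ∂μ) ∈ momentHull K φ v m := by
  have hφ_int : Integrable φ μ := integrable_of_continuousOn_of_ae_mem hK hμ hφ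
  have hv_int : Integrable v μ := integrable_of_upperSemicontinuousOn_of_ae_mem hK hμ hv ⟨m, hm⟩
  rw [← integral_pair hφ_int hv_int]
  refine (convex_convexHull ℝ _).integral_mem (isCompact_momentHull hK hφ hv).isClosed ?_
    (hφ_int.prodMk hv_int)
  filter_upwards [hμ] with x hx
  exact subset_convexHull ℝ _ ⟨(x, v x), ⟨hx, hm (mem_image_of_mem v hx), le_rfl⟩, rfl⟩

theorem exists_isMaxOn_integral_feasibleMeasures_card_le [MeasurableSpace X]
    [OpensMeasurableSpace X] {C : Set E} (hK : IsCompact K) (hφ : ContinuousOn φ K)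
    (hv : UpperSemicontinuousOn v K) (hv_bdd : BddBelow (v '' K)) (hC : IsClosed C)
    (hne : (feasibleMeasures K φ C).Nonempty) :
    ∃ μ ∈ feasibleMeasures K φ C,
      IsMaxOn (fun ν ↦ ∫ x, v x ∂ν) (feasibleMeasures K φ C) μ ∧
      ∃ S : Finset X, S.card ≤ Module.finrank ℝ E + 1 ∧ μ (↑S)ᶜ = 0 := by
  obtain ⟨m, hm⟩ := hv_bdd
  let A : Set (E × ℝ) := momentHull K φ v m ∩ Prod.fst ⁻¹' C
  have hA : IsCompact A := (isCompact_momentHull hK hφ hv).inter_right (hC.preimage continuous_fst)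
  have hmoments : ∀ μ ∈ feasibleMeasures K φ C, (∫ x, φ x ∂μ, ∫ x, v x ∂μ) ∈ A :=
    fun μ ⟨_, hμK, hμC⟩ ↦ ⟨integral_mem_momentHull hK hμK hφ hv hm, hμC⟩
  have hA_ne : A.Nonempty := hne.elim fun μ hμ ↦ ⟨_, hmoments μ hμ⟩
  obtain ⟨p, ⟨hp, hpC⟩, hp_max⟩ := hA.exists_isMaxOn hA_ne continuousOn_snd
  have hp_int : p ∉ interior (momentHull K φ v m) := by
    intro h
    obtain ⟨ε, hε, hmem⟩ := exists_pos_add_smul_mem_of_mem_interior h ((0, 1) : E × ℝ)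
    have hle : (p + ε • ((0, 1) : E × ℝ)).2 ≤ p.2 := hp_max ⟨hmem, by simpa using hpC⟩
    simp only [Prod.snd_add, Prod.smul_snd, smul_eq_mul, mul_one] at hle
    linarith
  obtain ⟨μ, ⟨hμ, hμK, hμp⟩, hμv, hS⟩ := exists_finite_support_of_mem_momentHull hp hp_int
  refine ⟨μ, ⟨hμ, hμK, ?_⟩, fun ν hν ↦ (hp_max (hmoments ν hν)).trans hμv, hS⟩
  rwa [mem_singleton_iff.1 hμp]

end MomentProblem

section CDF

theorem intervalIntegral_measureReal_Iic {μ : Measure ℝ} [IsFiniteMeasure μ] {a b : ℝ}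
    (hab : a ≤ b) (hμ : ∀ᵐ x ∂μ, x ∈ Icc a b) :
    ∫ s in a..b, μ.real (Iic s) = ∫ x, (b - x) ∂μ := by
  have hint : Integrable (fun x ↦ b - x) μ :=
    integrable_of_continuousOn_of_ae_mem isCompact_Icc hμ (by fun_prop)
  calc ∫ s in a..b, μ.real (Iic s)
      = ∫ t in 0..(b - a), μ.real (Iic (b - t)) := by
        rw [intervalIntegral.integral_comp_sub_left fun s ↦ μ.real (Iic s)]
        simp only [sub_sub_cancel, sub_zero]
    _ = ∫ t in Ioc 0 (b - a), μ.real {x | t ≤ b - x} := by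
        rw [intervalIntegral.integral_of_le (sub_nonneg.2 hab)]
        simp only [Iic, le_sub_comm]
    _ = ∫ x, (b - x) ∂μ :=
        (hint.integral_eq_integral_Ioc_meas_le (hμ.mono fun x hx ↦ sub_nonneg.2 hx.2)
          (hμ.mono fun x hx ↦ sub_le_sub_left hx.1 b)).symm

theorem measure_Icc_eq_measure_Iic {α : Type*} [Preorder α] [MeasurableSpace α] {μ : Measure α}
    {l : α} (hμ : ∀ᵐ x ∂μ, l ≤ x) (s : α) : μ (Icc l s) = μ (Iic s) :=
  measure_congr (hμ.mono fun _ hx ↦ propext (and_iff_right hx))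

theorem intervalIntegral_measureReal_Icc {μ : Measure ℝ} [IsProbabilityMeasure μ] {l a b : ℝ}
    (hla : l ≤ a) (hab : a ≤ b) (hμ : ∀ᵐ x ∂μ, x ∈ Icc a b) :
    ∫ s in a..b, μ.real (Icc l s) = b - ∫ x, x ∂μ := by
  have hid : Integrable (fun x ↦ x) μ :=
    integrable_of_continuousOn_of_ae_mem isCompact_Icc hμ continuousOn_id
  have hIic (s : ℝ) : μ.real (Icc l s) = μ.real (Iic s) :=
    congrArg ENNReal.toReal (measure_Icc_eq_measure_Iic (hμ.mono fun x hx ↦ hla.trans hx.1) s)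
  simp only [hIic]
  rw [intervalIntegral_measureReal_Iic hab hμ, integral_sub (integrable_const b) hid,
    integral_const, probReal_univ, one_smul]

theorem Dset_eq_feasibleMeasures {a b : ℝ} (h0 : 0 ≤ a) (hab : a ≤ b) (h1 : b ≤ 1) (c : ℝ) {n : ℕ}
    {u : Fin n → ℝ → ℝ} (hu : ∀ i, ContinuousOn (u i) (Icc a b)) :
    Dset a b c u =
      feasibleMeasures (Icc a b) (fun x ↦ ((fun i ↦ u i x), x)) (Ici 0 ×ˢ {b - c}) := by
  ext μ
  refine and_congr_right fun (_ : IsProbabilityMeasure μ) ↦ ?_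
  have hmass : μ (Icc a b) = 1 ↔ ∀ᵐ x ∂μ, x ∈ Icc a b :=
    (mem_ae_iff_prob_eq_one measurableSet_Icc).symm
  rw [hmass]
  refine and_congr_right fun hμ ↦ ?_
  have hμ01 : μ.restrict (Icc 0 1) = μ :=
    Measure.restrict_eq_self_of_ae_mem (hμ.mono (Icc_subset_Icc h0 h1))
  have hu_int (i : Fin n) : Integrable (u i) μ :=
    integrable_of_continuousOn_of_ae_mem isCompact_Icc hμ (hu i)
  have hid : Integrable (fun x ↦ x) μ :=
    integrable_of_continuousOn_of_ae_mem isCompact_Icc hμ continuousOn_id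
  have hcdf : ∫ s in a..b, (μ (Icc 0 s)).toReal = b - ∫ x, x ∂μ :=
    intervalIntegral_measureReal_Icc h0 hab hμ
  rw [integral_pair (.of_eval hu_int) hid, hcdf, hμ01, sub_eq_iff_comm, eq_comm (a := b - c)]
  refine and_congr_left' (forall_congr' fun i ↦ ?_)
  change _ ↔ 0 ≤ (∫ x, (fun j ↦ u j x) ∂μ) i
  rw [eval_integral hu_int]

end CDF

/-- If `𝒟` is nonempty, maximizing `∫ v dG̃` over `𝒟` admits a solution supported
on at most `n + 2` points. -/
theorem stmt8 (a b : ℝ) (h0 : 0 ≤ a) (hab : a ≤ b) (h1 : b ≤ 1) (c : ℝ) (n : ℕ)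
    (v : ℝ → ℝ) (hvb : ∃ C, ∀ s ∈ Set.Icc (0:ℝ) 1, |v s| ≤ C)
    (hv : UpperSemicontinuousOn v (Set.Icc 0 1))
    (u : Fin n → ℝ → ℝ) (hu : ∀ i, ContinuousOn (u i) (Set.Icc 0 1))
    (hne : (Dset a b c u).Nonempty) :
    ∃ μstar ∈ Dset a b c u,
      (∀ μ ∈ Dset a b c u,
        (∫ s in Set.Icc (0:ℝ) 1, v s ∂μ) ≤ ∫ s in Set.Icc (0:ℝ) 1, v s ∂μstar) ∧
      ∃ S : Finset ℝ, S.card ≤ n + 2 ∧ μstar (↑S)ᶜ = 0 := by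
  have hsub : Icc a b ⊆ Icc 0 1 := Icc_subset_Icc h0 h1
  have huab (i : Fin n) : ContinuousOn (u i) (Icc a b) := (hu i).mono hsub
  obtain ⟨C, hC⟩ := hvb
  have hv_bdd : BddBelow (v '' Icc a b) :=
    ⟨-C, forall_mem_image.2 fun x hx ↦ (abs_le.1 (hC x (hsub hx))).1⟩
  have hD := Dset_eq_feasibleMeasures h0 hab h1 c huab
  have hrestrict {μ : Measure ℝ} (hμ : μ ∈ Dset a b c u) : μ.restrict (Icc 0 1) = μ :=
    Measure.restrict_eq_self_of_ae_mem ((hD ▸ hμ).2.1.mono hsub)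
  obtain ⟨μ, hμ, hmax, S, hcard, hS⟩ := exists_isMaxOn_integral_feasibleMeasures_card_le
    isCompact_Icc (by fun_prop) (hv.mono hsub) hv_bdd
    (isClosed_Ici.prod isClosed_singleton) (hD ▸ hne)
  rw [← hD] at hμ hmax
  refine ⟨μ, hμ, fun ν hν ↦ ?_, S, by simpa using hcard, hS⟩
  rw [hrestrict hμ, hrestrict hν]
  exact hmax hν
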